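/- Define G : ℝ → ℝ^{2×2} by G(y) = (1/(1+y²))·[[y²−1, 2y],[2y, 1−y²]]. For every M ∈ ℝ^{2×2}, the Bochner integral ∫_ℝ (1/(π(1+y²)))·G(y)·M·G(y) dy equals (Tr(M)/2)·I₂ + ((M₁₂ − M₂₁)/2)·[[0, −1],[1, 0]]. In particular, the linear operator M ↦ ∫ G(y) M G(y)·(1/(π(1+y²))) dy on ℝ^{2×2} has eigenvalue 1 with eigenvector I₂, eigenvalue 0 with eigenvectors diag(1,−1) and [[0,1],[1,0]], and eigenvalue −1 with eigenvector [[0,−1],[1,0]]. -/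

import Mathlib

/-!
Write `G(y) = c·D + s·X` with `D = diag(1,-1)`, `X = [[0,1],[1,0]]`, and
`c = (y²-1)/(1+y²)`, `s = 2y/(1+y²)`, so that `c² + s² = 1` and `G(y)` is a reflection.
Conjugation by a reflection fixes the identity, negates `J = [[0,-1],[1,0]]`, and acts on the span
of `D` and `X` by a matrix with entries `±(c²-s²)` and `2cs` (`conj_Gmat`).
Putting `c = cos θ`, `s = sin θ`, the Cauchy density is the uniform law of `θ`. Hence the weight
integrates to `1` while `cos 2θ = c²-s²` and `sin 2θ = 2cs` integrate to `0`: since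
`dc/dy = 2s / (1+y²)` and `ds/dy = -2c / (1+y²)`, these have antiderivatives proportional to `sc` and `s²`,
which vanish at both ends. Only the components of `M` along `I` and `J` survive.
-/

open Matrix MeasureTheory

attribute [local instance] Matrix.frobeniusNormedAddCommGroup Matrix.frobeniusNormedSpace

/-- `G(y) = (1/(1+y²))·[[y²−1, 2y],[2y, 1−y²]]`. -/
noncomputable def Gmat (y : ℝ) : Matrix (Fin 2) (Fin 2) ℝ :=
  (1 / (1 + y ^ 2)) • !![y ^ 2 - 1, 2 * y; 2 * y, 1 - y ^ 2]

/-- The state-evolution operator `𝓕(M) = ∫ (1/(π(1+y²))) G(y) M G(y) dy`. -/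
noncomputable def Fop (M : Matrix (Fin 2) (Fin 2) ℝ) : Matrix (Fin 2) (Fin 2) ℝ :=
  ∫ y : ℝ, (1 / (Real.pi * (1 + y ^ 2))) • (Gmat y * M * Gmat y)

/-- `cos θ` in the parametrization `y = cot (θ / 2)`. -/
noncomputable def cosY (y : ℝ) : ℝ := (y ^ 2 - 1) / (1 + y ^ 2)

/-- `sin θ` in the parametrization `y = cot (θ / 2)`. -/
noncomputable def sinY (y : ℝ) : ℝ := 2 * y / (1 + y ^ 2)

lemma cosY_sq_add_sinY_sq (y : ℝ) : cosY y ^ 2 + sinY y ^ 2 = 1 := by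
  have h : (1 + y ^ 2) ≠ 0 := by positivity
  unfold cosY sinY
  field_simp
  ring

lemma hasDerivAt_cosY (y : ℝ) : HasDerivAt cosY (2 * sinY y * (1 + y ^ 2)⁻¹) y := by
  have h : (1 + y ^ 2) ≠ 0 := by positivity
  have h2 := hasDerivAt_pow 2 y
  refine ((h2.sub_const 1).div (h2.const_add 1) h).congr_deriv ?_
  unfold sinY
  field_simp
  push_cast
  ring

lemma hasDerivAt_sinY (y : ℝ) : HasDerivAt sinY (-2 * cosY y * (1 + y ^ 2)⁻¹) y := by
  have h : (1 + y ^ 2) ≠ 0 := by positivity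
  have h2 := hasDerivAt_pow 2 y
  refine (((hasDerivAt_id y).const_mul 2).div (h2.const_add 1) h).congr_deriv ?_
  unfold cosY
  simp only [id]
  field_simp
  push_cast
  ring

lemma abs_cosY_le (y : ℝ) : |cosY y| ≤ 1 := by
  rw [← sq_le_one_iff_abs_le_one]
  nlinarith [cosY_sq_add_sinY_sq y, sq_nonneg (sinY y)]

lemma abs_sinY_le (y : ℝ) : |sinY y| ≤ 1 := by
  rw [← sq_le_one_iff_abs_le_one]
  nlinarith [cosY_sq_add_sinY_sq y, sq_nonneg (cosY y)]

lemma continuous_cosY : Continuous cosY :=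
  continuous_iff_continuousAt.2 fun y => (hasDerivAt_cosY y).continuousAt

lemma continuous_sinY : Continuous sinY :=
  continuous_iff_continuousAt.2 fun y => (hasDerivAt_sinY y).continuousAt

/-- Holds because `|sinY y| ≤ 2 / |y|`, also at `y = 0`, where both sides are `0`. -/
lemma tendsto_sinY {l : Filter ℝ} (hl : Filter.Tendsto (fun y : ℝ => y⁻¹) l (nhds 0)) :
    Filter.Tendsto sinY l (nhds 0) := by
  have h2 : Filter.Tendsto (fun y : ℝ => 2 * |y⁻¹|) l (nhds 0) := by
    simpa using hl.abs.const_mul 2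
  refine squeeze_zero_norm (fun y => ?_) h2
  rcases eq_or_ne y 0 with rfl | hy
  · simp [sinY]
  · have h : (0 : ℝ) < 1 + y ^ 2 := by positivity
    have hy' : 0 < |y| := abs_pos.2 hy
    rw [sinY, Real.norm_eq_abs, abs_div, abs_mul, abs_of_pos h, abs_inv, abs_two,
      ← div_eq_mul_inv, div_le_div_iff₀ h hy']
    nlinarith [sq_abs y]

/-- If `f` is bounded and `sinY * f` is an antiderivative of an integrable `φ / (1 + y²)`, the
integral of the latter over the line vanishes, as `sinY` tends to `0` at both ends. -/
lemma integral_eq_zero_of_antideriv {f φ : ℝ → ℝ} (hf : ∀ y, |f y| ≤ 1)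
    (hint : Integrable fun y : ℝ => φ y * (1 + y ^ 2)⁻¹)
    (hd : ∀ y, HasDerivAt (fun y => sinY y * f y) (φ y * (1 + y ^ 2)⁻¹) y) :
    ∫ y : ℝ, φ y * (1 + y ^ 2)⁻¹ = 0 := by
  have lim {l : Filter ℝ} (hl : Filter.Tendsto (fun y : ℝ => y⁻¹) l (nhds 0)) :
      Filter.Tendsto (fun y => sinY y * f y) l (nhds 0) := by
    refine squeeze_zero_norm (fun y => ?_) (by simpa using (tendsto_sinY hl).abs)
    rw [Real.norm_eq_abs, abs_mul]
    exact mul_le_of_le_one_right (abs_nonneg _) (hf y)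
  rw [integral_of_hasDerivAt_of_tendsto hd hint (lim tendsto_inv_atBot_zero)
    (lim tendsto_inv_atTop_zero), sub_zero]

lemma integrable_mul_weight {φ : ℝ → ℝ} (C : ℝ) (hc : Continuous φ) (hb : ∀ y, |φ y| ≤ C) :
    Integrable fun y : ℝ => φ y * (1 + y ^ 2)⁻¹ :=
  integrable_inv_one_add_sq.bdd_mul hc.aestronglyMeasurable (Filter.Eventually.of_forall hb)

lemma integrable_cos_two :
    Integrable fun y : ℝ => (cosY y ^ 2 - sinY y ^ 2) * (1 + y ^ 2)⁻¹ := by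
  refine integrable_mul_weight 1 ((continuous_cosY.pow 2).sub (continuous_sinY.pow 2)) fun y => ?_
  have := cosY_sq_add_sinY_sq y
  rw [abs_le]
  constructor <;> nlinarith [sq_nonneg (cosY y), sq_nonneg (sinY y)]

lemma integrable_sin_two :
    Integrable fun y : ℝ => (2 * sinY y * cosY y) * (1 + y ^ 2)⁻¹ := by
  refine integrable_mul_weight 1 ((continuous_sinY.const_mul 2).mul continuous_cosY) fun y => ?_
  have := cosY_sq_add_sinY_sq y
  rw [abs_le]
  constructor <;> nlinarith [sq_nonneg (cosY y - sinY y), sq_nonneg (cosY y + sinY y)]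

lemma integral_cos_two :
    ∫ y : ℝ, (cosY y ^ 2 - sinY y ^ 2) * (1 + y ^ 2)⁻¹ = 0 := by
  have h := integral_eq_zero_of_antideriv (φ := fun y => -2 * (cosY y ^ 2 - sinY y ^ 2))
    abs_cosY_le (by simpa only [mul_assoc] using integrable_cos_two.const_mul (-2)) fun y =>
      ((hasDerivAt_sinY y).mul (hasDerivAt_cosY y)).congr_deriv (by ring)
  simp only [mul_assoc (-2 : ℝ), integral_const_mul] at h
  linarith

lemma integral_sin_two :
    ∫ y : ℝ, (2 * sinY y * cosY y) * (1 + y ^ 2)⁻¹ = 0 := by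
  have h := integral_eq_zero_of_antideriv (φ := fun y => -2 * (2 * sinY y * cosY y))
    abs_sinY_le
    (by simpa only [mul_assoc (-2 : ℝ)] using integrable_sin_two.const_mul (-2)) fun y =>
      ((hasDerivAt_sinY y).mul (hasDerivAt_sinY y)).congr_deriv (by ring)
  simp only [mul_assoc (-2 : ℝ), integral_const_mul] at h
  linarith

/-- Conjugation by the reflection `G(y)`, with `M` split along `I`, `J`, `D = diag(1,-1)` and
`X = [[0,1],[1,0]]`. -/
lemma conj_Gmat (M : Matrix (Fin 2) (Fin 2) ℝ) (y : ℝ) :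
    Gmat y * M * Gmat y =
      ((Matrix.trace M / 2) • (1 : Matrix (Fin 2) (Fin 2) ℝ) +
        ((M 0 1 - M 1 0) / 2) • !![(0 : ℝ), -1; 1, 0]) +
      (cosY y ^ 2 - sinY y ^ 2) •
        !![(M 0 0 - M 1 1) / 2, -((M 0 1 + M 1 0) / 2);
          -((M 0 1 + M 1 0) / 2), -((M 0 0 - M 1 1) / 2)] +
      (2 * sinY y * cosY y) •
        !![(M 0 1 + M 1 0) / 2, (M 0 0 - M 1 1) / 2;
          (M 0 0 - M 1 1) / 2, -((M 0 1 + M 1 0) / 2)] := by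
  have hG : Gmat y = !![cosY y, sinY y; sinY y, -cosY y] := by
    ext i j
    fin_cases i <;> fin_cases j <;> simp [Gmat, cosY, sinY] <;> ring
  have h := cosY_sq_add_sinY_sq y
  rw [hG]
  conv_lhs => rw [Matrix.eta_fin_two M]
  generalize cosY y = c at *
  generalize sinY y = s at *
  ext i j
  fin_cases i <;> fin_cases j <;>
    simp [Fin.sum_univ_two, Matrix.trace]
  · linear_combination (M 0 0 + M 1 1) / 2 * h
  · linear_combination (M 1 0 - M 0 1) / 2 * h
  · linear_combination (M 0 1 - M 1 0) / 2 * h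
  · linear_combination (M 0 0 + M 1 1) / 2 * h

/-- The average of `A + cos 2θ • B + sin 2θ • C` against the Cauchy density is `A`. -/
lemma integral_trig_poly {E : Type*} [NormedAddCommGroup E] [NormedSpace ℝ E] [CompleteSpace E]
    (A B C : E) :
    ∫ y : ℝ, (1 / (Real.pi * (1 + y ^ 2))) •
      (A + (cosY y ^ 2 - sinY y ^ 2) • B + (2 * sinY y * cosY y) • C) = A := by
  have hc := (integrable_cos_two.const_mul Real.pi⁻¹).smul_const B
  have hs := (integrable_sin_two.const_mul Real.pi⁻¹).smul_const C
  have h1 := (integrable_inv_one_add_sq.const_mul Real.pi⁻¹).smul_const A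
  have e (y : ℝ) : (1 / (Real.pi * (1 + y ^ 2))) •
      (A + (cosY y ^ 2 - sinY y ^ 2) • B + (2 * sinY y * cosY y) • C) =
      (Real.pi⁻¹ * (1 + y ^ 2)⁻¹) • A +
      (Real.pi⁻¹ * ((cosY y ^ 2 - sinY y ^ 2) * (1 + y ^ 2)⁻¹)) • B +
      (Real.pi⁻¹ * ((2 * sinY y * cosY y) * (1 + y ^ 2)⁻¹)) • C := by
    rw [one_div, mul_inv]
    module
  have h1c : Integrable fun y : ℝ => (Real.pi⁻¹ * (1 + y ^ 2)⁻¹) • A +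
      (Real.pi⁻¹ * ((cosY y ^ 2 - sinY y ^ 2) * (1 + y ^ 2)⁻¹)) • B := h1.add hc
  simp only [e]
  rw [integral_add h1c hs, integral_add h1 hc]
  simp only [integral_smul_const, integral_const_mul, integral_cos_two, integral_sin_two,
    integral_univ_inv_one_add_sq, inv_mul_cancel₀ Real.pi_ne_zero]
  simp

lemma Fop_eq (M : Matrix (Fin 2) (Fin 2) ℝ) :
    Fop M = (Matrix.trace M / 2) • (1 : Matrix (Fin 2) (Fin 2) ℝ) +
      ((M 0 1 - M 1 0) / 2) • !![(0 : ℝ), -1; 1, 0] := by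
  unfold Fop
  simp only [conj_Gmat]
  -- A finite-dimensional normed space is complete, so the Bochner integral is not a junk value.
  have : @CompleteSpace (Matrix (Fin 2) (Fin 2) ℝ)
      (Matrix.frobeniusNormedAddCommGroup
        (m := Fin 2) (n := Fin 2) (α := ℝ)).toMetricSpace.toUniformSpace :=
    FiniteDimensional.complete ℝ (Matrix (Fin 2) (Fin 2) ℝ)
  exact integral_trig_poly _ _ _

/-- `𝓕(M) = (Tr M / 2)·I₂ + ((M₁₂ − M₂₁)/2)·[[0,−1],[1,0]]`; in particular `𝓕` has
eigenvalue `1` at `I₂`, eigenvalue `0` at `diag(1,−1)` and `[[0,1],[1,0]]`, and eigenvalue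
`−1` at `[[0,−1],[1,0]]`. -/
theorem stmt15 :
    (∀ M : Matrix (Fin 2) (Fin 2) ℝ,
      Fop M = (Matrix.trace M / 2) • (1 : Matrix (Fin 2) (Fin 2) ℝ) +
        ((M 0 1 - M 1 0) / 2) • !![(0 : ℝ), -1; 1, 0]) ∧
    Fop 1 = (1 : Matrix (Fin 2) (Fin 2) ℝ) ∧
    Fop !![(1 : ℝ), 0; 0, -1] = 0 ∧
    Fop !![(0 : ℝ), 1; 1, 0] = 0 ∧
    Fop !![(0 : ℝ), -1; 1, 0] = (-1 : ℝ) • !![(0 : ℝ), -1; 1, 0] := by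
  refine ⟨Fop_eq, ?_, ?_, ?_, ?_⟩ <;> rw [Fop_eq] <;> ext i j <;> fin_cases i <;> fin_cases j <;>
    norm_num [Matrix.trace, Fin.sum_univ_two]
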